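/- Let H ∈ (1/2,1), let γ > 3−2H, let T > 0, and let λ_i := i²π² for integers i ≥ 1. Then there exists a constant C depending only on H, γ and T such that for all 0 ≤ s < t ≤ T, ∑_{i=1}^{∞} [ λ_i^{−(γ−1)} ∫ₛᵗ ∫ₛᵗ e^{−λ_i(t−u)} e^{−λ_i(t−v)} H(2H−1)|u−v|^{2H−2} du dv ]^{1/2} ≤ C (t−s)^{1/2}. -/

import Mathlib

/-!
Write `λ = λ_i` and `δ = t - s`. The heart of the matter is the estimate
`∫ₛᵗ e^{-λ(t-u)} |u-v|^{2H-2} du ≤ C λ^{1-2H}`, uniform in `v` and in `s < t`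
(`inner_integral_le`). On `|u-v| ≥ 1/λ` the singular kernel is at most `λ^{2-2H}` and the
exponential has integral at most `1/λ`; on `|u-v| < 1/λ` the exponential is at most `1` and the
kernel integrates to `2 λ^{1-2H}/(2H-1)`. Bounding the other exponential by `1`, the double
integral is at most `3 λ^{1-2H} δ` (`double_integral_le`). Hence the `i`-th summand is at most
`√3 δ^{1/2} λ_i^{(2-γ-2H)/2} ≤ √3 δ^{1/2} i^{2-γ-2H}`, and the last power is summable
precisely because `γ > 3 - 2H`.
-/

open Real MeasureTheory

lemma near_left {a : ℝ} (ha : -1 < a) (v : ℝ) {r : ℝ} (hr : 0 ≤ r) :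
    IntegrableOn (fun u => (v - u) ^ a) (Set.Ioc (v - r) v) ∧
      ∫ u in Set.Ioc (v - r) v, (v - u) ^ a = r ^ (a + 1) / (a + 1) := by
  constructor
  · rw [← intervalIntegrable_iff_integrableOn_Ioc_of_le (by linarith)]
    have h := (intervalIntegral.intervalIntegrable_rpow' (a := r) (b := 0) ha).comp_sub_left v
    simpa using h
  · rw [← intervalIntegral.integral_of_le (by linarith),
      intervalIntegral.integral_comp_sub_left (fun x => x ^ a), integral_rpow (Or.inl ha)]
    rw [sub_self, sub_sub_cancel, Real.zero_rpow (by linarith), sub_zero]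

lemma near_right {a : ℝ} (ha : -1 < a) (v : ℝ) {r : ℝ} (hr : 0 ≤ r) :
    IntegrableOn (fun u => (u - v) ^ a) (Set.Ioc v (v + r)) ∧
      ∫ u in Set.Ioc v (v + r), (u - v) ^ a = r ^ (a + 1) / (a + 1) := by
  constructor
  · rw [← intervalIntegrable_iff_integrableOn_Ioc_of_le (by linarith)]
    have h := (intervalIntegral.intervalIntegrable_rpow' (a := 0) (b := r) ha).comp_sub_right v
    simpa [add_comm] using h
  · rw [← intervalIntegral.integral_of_le (by linarith),
      intervalIntegral.integral_comp_sub_right (fun x => x ^ a), integral_rpow (Or.inl ha)]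
    rw [sub_self, add_sub_cancel_left, Real.zero_rpow (by linarith), sub_zero]

lemma exp_integral_le {L s t : ℝ} (hL : 0 < L) :
    ∫ u in s..t, Real.exp (-L * (t - u)) ≤ L⁻¹ := by
  have hd : ∀ u ∈ Set.uIcc s t,
      HasDerivAt (fun u => L⁻¹ * Real.exp (-L * (t - u))) (Real.exp (-L * (t - u))) u := by
    intro u _
    have h := ((((hasDerivAt_id u).const_sub t).const_mul (-L)).exp).const_mul L⁻¹
    convert! h using 1
    simp only [id]
    field_simp
  rw [intervalIntegral.integral_eq_sub_of_hasDerivAt hd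
    (by apply Continuous.intervalIntegrable; fun_prop)]
  have : 0 ≤ L⁻¹ * Real.exp (-L * (t - s)) := by positivity
  simp only [sub_self, mul_zero, Real.exp_zero, mul_one]
  linarith

/-- An indicator of `A` integrates over any `S` to at most the integral over `A`. -/
lemma setIntegral_indicator_le {f : ℝ → ℝ} {A S : Set ℝ} (hA : MeasurableSet A)
    (hf : IntegrableOn f A) (h0 : ∀ x ∈ A, 0 ≤ f x) :
    ∫ u in S, A.indicator f u ≤ ∫ u in A, f u := by
  rw [setIntegral_indicator hA]
  apply setIntegral_mono_set hf
  · exact (ae_restrict_iff' hA).2 (Filter.Eventually.of_forall h0)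
  · exact Set.inter_subset_right.eventuallyLE

/-- Convolving the singular kernel with the exponential costs a factor `L ^ (-(a + 1))`,
uniformly in the position `v` of the singularity and in the length of the interval. -/
lemma inner_integral_le {a L s t v : ℝ} (ha : -1 < a) (ha0 : a ≤ 0) (hL : 0 < L) (hst : s ≤ t) :
    ∫ u in s..t, Real.exp (-L * (t - u)) * |u - v| ^ a
      ≤ (1 + 2 / (a + 1)) * L ^ (-(a + 1)) := by
  have hr : 0 < L⁻¹ := by positivity
  obtain ⟨il, el⟩ := near_left ha v hr.le
  obtain ⟨ir, er⟩ := near_right ha v hr.le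
  have hE : IntegrableOn (fun u => L⁻¹ ^ a * Real.exp (-L * (t - u))) (Set.Ioc s t) := by
    rw [← intervalIntegrable_iff_integrableOn_Ioc_of_le hst]
    apply Continuous.intervalIntegrable
    fun_prop
  have hIl : IntegrableOn ((Set.Ioc (v - L⁻¹) v).indicator fun u => (v - u) ^ a)
      (Set.Ioc s t) := ((integrable_indicator_iff measurableSet_Ioc).2 il).integrableOn
  have hIr : IntegrableOn ((Set.Ioc v (v + L⁻¹)).indicator fun u => (u - v) ^ a)
      (Set.Ioc s t) := ((integrable_indicator_iff measurableSet_Ioc).2 ir).integrableOn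
  have hl0 : ∀ u ∈ Set.Ioc (v - L⁻¹) v, 0 ≤ (v - u) ^ a :=
    fun u hu => Real.rpow_nonneg (by linarith [hu.2]) _
  have hr0 : ∀ u ∈ Set.Ioc v (v + L⁻¹), 0 ≤ (u - v) ^ a :=
    fun u hu => Real.rpow_nonneg (by linarith [hu.1]) _
  rw [intervalIntegral.integral_of_le hst]
  -- The first summand of the majorant handles `|u - v| ≥ L⁻¹`, the two indicators the two sides
  -- of the singularity; as it is integrable, the integrand itself needs no integrability proof.
  have key : ∫ u in Set.Ioc s t, Real.exp (-L * (t - u)) * |u - v| ^ a ≤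
      ∫ u in Set.Ioc s t, ((L⁻¹ ^ a * Real.exp (-L * (t - u)) +
        (Set.Ioc (v - L⁻¹) v).indicator (fun u => (v - u) ^ a) u) +
        (Set.Ioc v (v + L⁻¹)).indicator (fun u => (u - v) ^ a) u) := by
    apply integral_mono_of_nonneg
    · exact Filter.Eventually.of_forall fun u => by positivity
    · exact (hE.add hIl).add hIr
    · refine (ae_restrict_iff' measurableSet_Ioc).2 (Filter.Eventually.of_forall fun u hu => ?_)
      have n1 : 0 ≤ L⁻¹ ^ a * Real.exp (-L * (t - u)) := by positivity
      have n2 := Set.indicator_nonneg hl0 u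
      have n3 := Set.indicator_nonneg hr0 u
      have he : Real.exp (-L * (t - u)) ≤ 1 := by
        rw [Real.exp_le_one_iff]
        nlinarith [mul_nonneg hL.le (sub_nonneg.2 hu.2)]
      have hnear : Real.exp (-L * (t - u)) * |u - v| ^ a ≤ |u - v| ^ a :=
        mul_le_of_le_one_left (by positivity) he
      simp only
      by_cases h1 : u ∈ Set.Ioc (v - L⁻¹) v
      · rw [Set.indicator_of_mem h1] at n2 ⊢
        rw [abs_sub_comm, abs_of_nonneg (by linarith [h1.2] : 0 ≤ v - u)] at *
        linarith
      by_cases h2 : u ∈ Set.Ioc v (v + L⁻¹)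
      · rw [Set.indicator_of_mem h2] at n3 ⊢
        rw [abs_of_nonneg (by linarith [h2.1] : 0 ≤ u - v)] at *
        linarith
      have hfar : L⁻¹ ≤ |u - v| := by
        rw [Set.mem_Ioc] at h1 h2
        by_contra! h
        rw [abs_lt] at h
        rcases le_or_gt u v with h' | h'
        · exact h1 ⟨by linarith [h.1], h'⟩
        · exact h2 ⟨h', by linarith [h.2]⟩
      have := mul_le_mul_of_nonneg_left (Real.rpow_le_rpow_of_nonpos hr hfar ha0)
        (Real.exp_pos (-L * (t - u))).le
      linarith
  refine key.trans ?_
  have hEl : IntegrableOn (fun u => L⁻¹ ^ a * Real.exp (-L * (t - u)) +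
      (Set.Ioc (v - L⁻¹) v).indicator (fun u => (v - u) ^ a) u) (Set.Ioc s t) := hE.add hIl
  rw [integral_add hEl hIr, integral_add hE hIl, integral_const_mul,
    ← intervalIntegral.integral_of_le hst]
  have b1 := mul_le_mul_of_nonneg_left (exp_integral_le (s := s) (t := t) hL)
    (Real.rpow_nonneg hr.le a)
  have b2 := setIntegral_indicator_le (S := Set.Ioc s t) measurableSet_Ioc il hl0
  have b3 := setIntegral_indicator_le (S := Set.Ioc s t) measurableSet_Ioc ir hr0
  rw [el] at b2
  rw [er] at b3
  have e1 : L⁻¹ ^ a * L⁻¹ = L⁻¹ ^ (a + 1) := by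
    rw [Real.rpow_add hr, Real.rpow_one]
  have e2 : L ^ (-(a + 1)) = L⁻¹ ^ (a + 1) := by
    rw [Real.rpow_neg hL.le, Real.inv_rpow hL.le]
  rw [e1] at b1
  rw [e2]
  calc _ ≤ L⁻¹ ^ (a + 1) + L⁻¹ ^ (a + 1) / (a + 1) + L⁻¹ ^ (a + 1) / (a + 1) := by gcongr
    _ = _ := by ring

/-- The prefactor `H(2H-1)` absorbs the pole `2/(2H-1)` of the previous bound:
`H(2H-1) + 2H ≤ 3`. The outer integral is estimated by a sup bound over `v`. -/
lemma double_integral_le {H L s t : ℝ} (hH : H ∈ Set.Ioo (1/2 : ℝ) 1) (hL : 0 < L) (hst : s ≤ t) :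
    ∫ v in s..t, ∫ u in s..t, Real.exp (-L*(t-u)) * Real.exp (-L*(t-v)) *
        (H * (2*H - 1) * |u - v| ^ (2*H - 2))
      ≤ 3 * L ^ (1 - 2*H) * (t - s) := by
  obtain ⟨h1, h2⟩ := hH
  have hc : 0 < 2 * H - 1 := by linarith
  have hH0 : 0 < H := by linarith
  have hb : ∀ v ∈ Set.uIoc s t, ‖∫ u in s..t, Real.exp (-L*(t-u)) * Real.exp (-L*(t-v)) *
        (H * (2*H - 1) * |u - v| ^ (2*H - 2))‖ ≤ 3 * L ^ (1 - 2*H) := by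
    intro v hv
    rw [Set.uIoc_of_le hst] at hv
    have e : ∫ u in s..t, Real.exp (-L*(t-u)) * Real.exp (-L*(t-v)) *
        (H * (2*H - 1) * |u - v| ^ (2*H - 2)) = Real.exp (-L*(t-v)) * (H * (2*H - 1) *
          ∫ u in s..t, Real.exp (-L*(t-u)) * |u - v| ^ (2*H - 2)) := by
      rw [← intervalIntegral.integral_const_mul, ← intervalIntegral.integral_const_mul]
      congr 1
      ext u
      ring
    have hJ0 : 0 ≤ ∫ u in s..t, Real.exp (-L*(t-u)) * |u - v| ^ (2*H - 2) :=
      intervalIntegral.integral_nonneg hst fun u _ => by positivity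
    have hJ := inner_integral_le (a := 2*H - 2) (v := v) (by linarith) (by linarith) hL hst
    have he : Real.exp (-L*(t-v)) ≤ 1 := by
      rw [Real.exp_le_one_iff]
      nlinarith [mul_nonneg hL.le (sub_nonneg.2 hv.2)]
    have hm : 0 ≤ H * (2*H - 1) * ∫ u in s..t, Real.exp (-L*(t-u)) * |u - v| ^ (2*H - 2) :=
      mul_nonneg (by positivity) hJ0
    rw [e, Real.norm_of_nonneg (mul_nonneg (Real.exp_pos _).le hm)]
    refine (mul_le_of_le_one_left hm he).trans ?_
    refine (mul_le_mul_of_nonneg_left hJ (by positivity)).trans ?_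
    have ex : -(2*H - 2 + 1) = 1 - 2*H := by ring
    have ed : 2*H - 2 + 1 = 2*H - 1 := by ring
    rw [ex, ed, ← mul_assoc]
    refine mul_le_mul_of_nonneg_right ?_ (by positivity)
    have : H * (2*H - 1) * (1 + 2 / (2*H - 1)) = H * (2*H - 1) + 2 * H := by
      have := mul_div_cancel₀ 2 hc.ne'
      linear_combination H * this
    rw [this]
    nlinarith
  have h := intervalIntegral.norm_integral_le_of_norm_le_const hb
  rw [abs_of_nonneg (by linarith)] at h
  exact (le_abs_self _).trans h

/-- Temporal increment bound for the weighted variances: for `H ∈ (1/2,1)`, `γ > 3-2H`,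
`T > 0` and `λ_i = i²π²`, there is `C = C(H,γ,T)` such that for all `0 ≤ s < t ≤ T`,
`∑ᵢ [λ_i^(-(γ-1)) ∫ₛᵗ∫ₛᵗ e^{-λ_i(t-u)} e^{-λ_i(t-v)} H(2H-1)|u-v|^(2H-2) du dv]^(1/2)
  ≤ C (t-s)^(1/2)`. -/
theorem summed_sqrt_increment_bound
    (H γ T : ℝ) (hH : H ∈ Set.Ioo (1/2 : ℝ) 1) (hγ : 3 - 2*H < γ) (hT : 0 < T) :
    ∃ C : ℝ, 0 < C ∧ ∀ s t : ℝ, 0 ≤ s → s < t → t ≤ T →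
      (∑' i : ℕ, Real.sqrt ((((i:ℝ)+1)^2 * Real.pi^2) ^ (-(γ - 1)) *
        ∫ v in s..t, ∫ u in s..t,
          Real.exp (-(((i:ℝ)+1)^2 * Real.pi^2)*(t-u)) *
            Real.exp (-(((i:ℝ)+1)^2 * Real.pi^2)*(t-v)) *
              (H * (2*H - 1) * |u - v| ^ (2*H - 2))))
      ≤ C * Real.sqrt (t - s) := by
  have hs : Summable fun i : ℕ => ((i:ℝ) + 1) ^ (2 - γ - 2*H) := by
    have h : Summable fun n : ℕ => (n:ℝ) ^ (2 - γ - 2*H) :=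
      Real.summable_nat_rpow.2 (by linarith)
    simpa using (summable_nat_add_iff 1).2 h
  have hS : 0 ≤ ∑' i : ℕ, ((i:ℝ) + 1) ^ (2 - γ - 2*H) := tsum_nonneg fun i => by positivity
  refine ⟨√3 * (∑' i : ℕ, ((i:ℝ) + 1) ^ (2 - γ - 2*H)) + 1, by positivity, ?_⟩
  intro s t _ hst _
  have hterm : ∀ i : ℕ, Real.sqrt ((((i:ℝ)+1)^2 * Real.pi^2) ^ (-(γ - 1)) *
        ∫ v in s..t, ∫ u in s..t,
          Real.exp (-(((i:ℝ)+1)^2 * Real.pi^2)*(t-u)) *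
            Real.exp (-(((i:ℝ)+1)^2 * Real.pi^2)*(t-v)) *
              (H * (2*H - 1) * |u - v| ^ (2*H - 2)))
      ≤ √3 * √(t - s) * ((i:ℝ) + 1) ^ (2 - γ - 2*H) := by
    intro i
    have hi : (0:ℝ) < (i:ℝ) + 1 := by positivity
    have hL : 0 < ((i:ℝ)+1)^2 * Real.pi^2 := by positivity
    have hd := double_integral_le hH hL hst.le
    have hLi : ((i:ℝ)+1)^2 ≤ ((i:ℝ)+1)^2 * Real.pi^2 :=
      le_mul_of_one_le_right (by positivity) (by nlinarith [Real.pi_gt_three])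
    generalize ((i:ℝ)+1)^2 * Real.pi^2 = L at hL hd hLi ⊢
    apply Real.sqrt_le_iff.2 ⟨by positivity, ?_⟩
    have hp : L ^ (2 - γ - 2*H) ≤ (((i:ℝ) + 1) ^ (2 - γ - 2*H)) ^ 2 := by
      refine (Real.rpow_le_rpow_of_nonpos (by positivity) hLi (by linarith)).trans_eq ?_
      rw [← Real.rpow_natCast, ← Real.rpow_natCast, ← Real.rpow_mul hi.le, ← Real.rpow_mul hi.le,
        mul_comm]
    have hsplit : L ^ (-(γ - 1)) * L ^ (1 - 2*H) = L ^ (2 - γ - 2*H) := by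
      rw [← Real.rpow_add hL]
      congr 1
      ring
    have hts : 0 ≤ t - s := by linarith
    calc _ ≤ L ^ (-(γ - 1)) * (3 * L ^ (1 - 2*H) * (t - s)) := by gcongr
      _ = 3 * (t - s) * L ^ (2 - γ - 2*H) := by rw [← hsplit]; ring
      _ ≤ 3 * (t - s) * (((i:ℝ) + 1) ^ (2 - γ - 2*H)) ^ 2 := by gcongr
      _ = _ := by rw [mul_pow, mul_pow, Real.sq_sqrt (by norm_num), Real.sq_sqrt hts]
  have hsum := hs.mul_left (√3 * √(t - s))
  refine (Summable.tsum_le_tsum hterm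
    (Summable.of_nonneg_of_le (fun i => Real.sqrt_nonneg _) hterm hsum) hsum).trans ?_
  rw [tsum_mul_left]
  nlinarith [Real.sqrt_nonneg (t - s)]
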